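/- arXiv:1604.00775 — 6 statements merged into one kernel-verified Lean document; each statement's English description precedes it below -/
import Mathlib

section
/- Let (A_k)_{k∈F} be a finite family of observables on ℂ^n such that for every k and every outcome x the matrix A_k(x) is a diagonal matrix. Then there exists a single broadcasting channel Λ that broadcasts every A_k, i.e., Λ*(A_k(x) ⊗ 1) = A_k(x) = Λ*(1 ⊗ A_k(x)) for every k and every outcome x. -/
open Matrix
open scoped Kronecker ComplexOrder

noncomputable section

abbrev Mat (n : ℕ) : Type := Matrix (Fin n) (Fin n) ℂ

section CopyChannel

variable {ι : Type*} [DecidableEq ι]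

/-- The Kraus operators `|i⟩|i⟩⟨i|` of the classical copying channel, which measures in the standard
basis and prepares two copies of the basis vector found. Its Heisenberg dual sees a matrix on the
tensor square only through the diagonal entries at the pairs `(i, i)`. -/
def copyKraus (R : Type*) [Zero R] [One R] (i : ι) : Matrix (ι × ι) ι R :=
  single (i, i) i 1

variable [Fintype ι] {R : Type*} [Semiring R] [StarRing R]

lemma conjTranspose_copyKraus_mul_mul (X : Matrix (ι × ι) (ι × ι) R) (i : ι) :
    (copyKraus R i)ᴴ * X * copyKraus R i = single i i (X (i, i) (i, i)) := by
  rw [copyKraus, conjTranspose_single, single_mul_mul_single, star_one, one_mul, mul_one]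

lemma sum_conjTranspose_copyKraus_mul_mul (X : Matrix (ι × ι) (ι × ι) R) :
    ∑ i : ι, (copyKraus R i)ᴴ * X * copyKraus R i = diagonal fun i ↦ X (i, i) (i, i) := by
  simp_rw [conjTranspose_copyKraus_mul_mul, sum_single_eq_diagonal]

lemma sum_conjTranspose_copyKraus_mul_copyKraus :
    ∑ i : ι, (copyKraus R i)ᴴ * copyKraus R i = 1 := by
  simpa using sum_conjTranspose_copyKraus_mul_mul (1 : Matrix (ι × ι) (ι × ι) R)

lemma sum_conjTranspose_copyKraus_mul_kronecker_mul (A B : Matrix ι ι R) :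
    ∑ i : ι, (copyKraus R i)ᴴ * (A ⊗ₖ B) * copyKraus R i = diagonal (diag A * diag B) :=
  sum_conjTranspose_copyKraus_mul_mul (A ⊗ₖ B)

theorem diagonal_family_broadcastable_general :
    ∃ K : ι → Matrix (ι × ι) ι R,
      ∑ i, (K i)ᴴ * K i = 1 ∧
      ∀ D : Matrix ι ι R, D.IsDiag →
        ∑ i, (K i)ᴴ * (D ⊗ₖ (1 : Matrix ι ι R)) * K i = D ∧
        ∑ i, (K i)ᴴ * ((1 : Matrix ι ι R) ⊗ₖ D) * K i = D := by
  refine ⟨copyKraus R, sum_conjTranspose_copyKraus_mul_copyKraus, fun D hD ↦ ⟨?_, ?_⟩⟩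
  · rw [sum_conjTranspose_copyKraus_mul_kronecker_mul, diag_one, mul_one, hD.diagonal_diag]
  · rw [sum_conjTranspose_copyKraus_mul_kronecker_mul, diag_one, one_mul, hD.diagonal_diag]

end CopyChannel

/-- A finite family of observables on ℂ^n, all of whose effects are diagonal
matrices, admits a single broadcasting channel that broadcasts every member of the family. -/
theorem diagonal_family_broadcastable {n : ℕ} {F : Type} [Fintype F]
    {Ω : F → Type} [∀ k, Fintype (Ω k)]
    (A : (k : F) → Ω k → Mat n)
    (hpos : ∀ k x, (A k x).PosSemidef)
    (hsum : ∀ k, ∑ x, A k x = 1)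
    (hdiag : ∀ k x, (A k x).IsDiag) :
    ∃ (m : ℕ) (K : Fin m → Matrix (Fin n × Fin n) (Fin n) ℂ),
      (∑ i, (K i)ᴴ * K i = 1) ∧
      ∀ k x,
        (∑ i, (K i)ᴴ * (A k x ⊗ₖ (1 : Mat n)) * K i = A k x) ∧
        (∑ i, (K i)ᴴ * ((1 : Mat n) ⊗ₖ A k x) * K i = A k x) := by
  obtain ⟨K, hK, hbroadcast⟩ := diagonal_family_broadcastable_general (ι := Fin n) (R := ℂ)
  exact ⟨n, K, hK, fun k x ↦ hbroadcast (A k x) (hdiag k x)⟩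
end
end

section
/- Let A and B be observables on ℂ^n such that A is commutative, B is commutative, and A and B are mutually commuting. Then there exists a broadcasting channel Λ that broadcasts both A and B, i.e., Λ*(A(x) ⊗ 1) = A(x) = Λ*(1 ⊗ A(x)) and Λ*(B(y) ⊗ 1) = B(y) = Λ*(1 ⊗ B(y)) for all outcomes x, y. -/
open Matrix
open scoped Kronecker ComplexOrder

noncomputable section

/-!
Pairwise commuting Hermitian matrices are diagonal in a common orthonormal basis `u`. Measuring in
that basis and preparing two copies of the basis vector found is the channel with Kraus operators
`(uᵢ ⊗ uᵢ) uᵢᴴ`. If `X` and `Y` are diagonal in the basis with eigenvalues `xᵢ` and `yᵢ`, its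
Heisenberg dual maps `X ⊗ Y` to `∑ i, xᵢ yᵢ uᵢ uᵢᴴ = X Y`; taking `Y = 1` or `X = 1` shows that it
broadcasts every matrix diagonal in the basis.
-/

open Module
open scoped Function

section JointDiagonalization

variable {𝕜 E n ι : Type*} [RCLike 𝕜]

theorem exists_orthonormalBasis_forall_exists_mem [NormedAddCommGroup E] [InnerProductSpace 𝕜 E]
    [FiniteDimensional 𝕜 E] {V : ι → Submodule 𝕜 E}
    (hV : OrthogonalFamily 𝕜 (fun i ↦ V i) fun i ↦ (V i).subtypeₗᵢ) (hV_top : ⨆ i, V i = ⊤) :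
    ∃ b : OrthonormalBasis (Fin (finrank 𝕜 E)) 𝕜 E, ∀ a, ∃ i, b a ∈ V i := by
  classical
  have hV_internal : DirectSum.IsInternal V :=
    hV.isInternal_iff.2 (by rw [hV_top, Submodule.top_orthogonal_eq_bot])
  -- Adapted bases need a finite index type: only finitely many of the `V i` are nonzero.
  have : Fintype {i // V i ≠ ⊥} :=
    (WellFoundedGT.finite_ne_bot_of_iSupIndep hV_internal.submodule_iSupIndep).fintype
  have hne_internal := DirectSum.isInternal_ne_bot_iff.2 hV_internal
  have hne_orthogonal := hV.comp (Subtype.val_injective (p := fun i ↦ V i ≠ ⊥))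
  exact ⟨hne_internal.subordinateOrthonormalBasis rfl hne_orthogonal,
    fun a ↦ ⟨_, hne_internal.subordinateOrthonormalBasis_subordinate rfl a hne_orthogonal⟩⟩

theorem exists_orthonormalBasis_forall_apply_eq_smul [NormedAddCommGroup E]
    [InnerProductSpace 𝕜 E] [FiniteDimensional 𝕜 E] {T : ι → E →ₗ[𝕜] E}
    (hT : ∀ i, (T i).IsSymmetric) (hcomm : Pairwise (Commute on T)) :
    ∃ (b : OrthonormalBasis (Fin (finrank 𝕜 E)) 𝕜 E) (μ : Fin (finrank 𝕜 E) → ι → 𝕜),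
      ∀ a i, T i (b a) = μ a i • b a := by
  obtain ⟨b, hb⟩ := exists_orthonormalBasis_forall_exists_mem
    (LinearMap.IsSymmetric.orthogonalFamily_iInf_eigenspaces hT)
    (LinearMap.IsSymmetric.iSup_iInf_eq_top_of_commute hT hcomm)
  choose μ hμ using hb
  exact ⟨b, μ, fun a i ↦ End.mem_eigenspace_iff.1 ((Submodule.mem_iInf _).1 (hμ a) i)⟩

variable [Fintype n] [DecidableEq n]

theorem isDiag_conjTranspose_toMatrix_mul_mul_toMatrix
    (b : OrthonormalBasis n 𝕜 (EuclideanSpace 𝕜 n))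
    {T : Matrix n n 𝕜} {μ : n → 𝕜} (hb : ∀ a, T.toEuclideanLin (b a) = μ a • b a) :
    (((EuclideanSpace.basisFun n 𝕜).toBasis.toMatrix b)ᴴ * T *
      (EuclideanSpace.basisFun n 𝕜).toBasis.toMatrix b).IsDiag := by
  set U := (EuclideanSpace.basisFun n 𝕜).toBasis.toMatrix b
  have hTU : T * U = U * diagonal μ := by
    ext k a
    rw [mul_diagonal, mul_comm]
    simpa [U, Basis.toMatrix_apply, mul_apply, mulVec, dotProduct] using congr($(hb a) k)
  rw [Matrix.mul_assoc, hTU, ← Matrix.mul_assoc,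
    OrthonormalBasis.toMatrix_orthonormalBasis_conjTranspose_mul_self, Matrix.one_mul]
  exact isDiag_diagonal μ

theorem exists_unitary_forall_isDiag {T : ι → Matrix n n 𝕜} (hT : ∀ i, (T i).IsHermitian)
    (hcomm : Pairwise (Commute on T)) :
    ∃ U ∈ unitaryGroup n 𝕜, ∀ i, (Uᴴ * T i * U).IsDiag := by
  obtain ⟨b, μ, hb⟩ := exists_orthonormalBasis_forall_apply_eq_smul
    (fun i ↦ isSymmetric_toEuclideanLin_iff.2 (hT i))
    (fun i j hij ↦ (hcomm hij).map (toLpLinAlgEquiv 2))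
  let e : Fin (finrank 𝕜 (EuclideanSpace 𝕜 n)) ≃ n := Fintype.equivOfCardEq (by simp)
  refine ⟨_, (EuclideanSpace.basisFun n 𝕜).toMatrix_orthonormalBasis_mem_unitary (b.reindex e),
    fun i ↦ isDiag_conjTranspose_toMatrix_mul_mul_toMatrix (b.reindex e)
      (μ := fun a ↦ μ (e.symm a) i) fun a ↦ ?_⟩
  simpa using hb (e.symm a) i

end JointDiagonalization

section Broadcasting

variable {R m n ι : Type*}

/-- The Heisenberg dual of the channel with Kraus operators `K`. The normalization
`∑ i, (K i)ᴴ * K i = 1` is not built in: it is the unitality condition `krausDual K 1 = 1`. -/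
def krausDual [Fintype m] [Fintype ι] [NonUnitalNonAssocSemiring R] [Star R]
    (K : ι → Matrix m n R) (X : Matrix m m R) : Matrix n n R :=
  ∑ i, (K i)ᴴ * X * K i

variable [Fintype n] [DecidableEq n]

/-- The channel with Kraus operators `K` broadcasts the single matrix `X`; it broadcasts an
observable when this holds for each of the matrices that make up the observable. -/
def Broadcasts [Fintype ι] [NonAssocSemiring R] [Star R] (K : ι → Matrix (n × n) n R)
    (X : Matrix n n R) : Prop :=
  krausDual K (X ⊗ₖ (1 : Matrix n n R)) = X ∧ krausDual K ((1 : Matrix n n R) ⊗ₖ X) = X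

variable [CommSemiring R] [StarRing R]

/-- The Kraus operators of the channel that measures in the basis formed by the columns `uᵢ` of
`U` and prepares two copies of the outcome: `cloningKraus U i` is `(uᵢ ⊗ uᵢ) uᵢᴴ`. -/
def cloningKraus (U : Matrix n n R) (i : n) : Matrix (n × n) n R :=
  (U ⊗ₖ U) * single (i, i) i (1 : R) * Uᴴ

theorem krausDual_cloningKraus_kronecker (U X Y : Matrix n n R) :
    krausDual (cloningKraus U) (X ⊗ₖ Y) =
      U * (diagonal (Uᴴ * X * U).diag * diagonal (Uᴴ * Y * U).diag) * Uᴴ := by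
  have hconj : (U ⊗ₖ U)ᴴ * (X ⊗ₖ Y) * (U ⊗ₖ U) = (Uᴴ * X * U) ⊗ₖ (Uᴴ * Y * U) := by
    rw [conjTranspose_kronecker, ← mul_kronecker_mul, ← mul_kronecker_mul]
  have hterm (i : n) : (cloningKraus U i)ᴴ * (X ⊗ₖ Y) * cloningKraus U i =
      U * single i i ((Uᴴ * X * U).diag i * (Uᴴ * Y * U).diag i) * Uᴴ :=
    calc
      _ = U * (single i (i, i) (1 : R) * ((U ⊗ₖ U)ᴴ * (X ⊗ₖ Y) * (U ⊗ₖ U)) *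
          single (i, i) i (1 : R)) * Uᴴ := by
        simp only [cloningKraus, conjTranspose_mul, conjTranspose_conjTranspose,
          conjTranspose_single, star_one, Matrix.mul_assoc]
      _ = _ := by
        rw [hconj, single_mul_mul_single, kronecker_apply, one_mul, mul_one, diag_apply, diag_apply]
  simp only [krausDual, hterm]
  rw [← Finset.sum_mul, ← Finset.mul_sum, sum_single_eq_diagonal, diagonal_mul_diagonal]

theorem krausDual_cloningKraus_kronecker_of_isDiag {U X Y : Matrix n n R}
    (hU : U * Uᴴ = 1) (hX : (Uᴴ * X * U).IsDiag) (hY : (Uᴴ * Y * U).IsDiag) :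
    krausDual (cloningKraus U) (X ⊗ₖ Y) = X * Y :=
  calc
    _ = U * ((Uᴴ * X * U) * (Uᴴ * Y * U)) * Uᴴ := by
      rw [krausDual_cloningKraus_kronecker, hX.diagonal_diag, hY.diagonal_diag]
    _ = (U * Uᴴ) * X * (U * Uᴴ) * Y * (U * Uᴴ) := by simp only [Matrix.mul_assoc]
    _ = X * Y := by simp only [hU, Matrix.one_mul, Matrix.mul_one]

theorem isDiag_conjTranspose_mul_one_mul {U : Matrix n n R} (hU : U * Uᴴ = 1) :
    (Uᴴ * 1 * U).IsDiag := by
  rw [Matrix.mul_one, mul_eq_one_comm.1 hU]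
  exact isDiag_one

theorem krausDual_cloningKraus_one {U : Matrix n n R} (hU : U * Uᴴ = 1) :
    krausDual (cloningKraus U) 1 = 1 := by
  have hone := isDiag_conjTranspose_mul_one_mul hU
  simpa using krausDual_cloningKraus_kronecker_of_isDiag hU hone hone

theorem broadcasts_cloningKraus {U X : Matrix n n R} (hU : U * Uᴴ = 1)
    (hX : (Uᴴ * X * U).IsDiag) : Broadcasts (cloningKraus U) X := by
  have hone := isDiag_conjTranspose_mul_one_mul hU
  exact ⟨(krausDual_cloningKraus_kronecker_of_isDiag hU hX hone).trans (Matrix.mul_one X),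
    (krausDual_cloningKraus_kronecker_of_isDiag hU hone hX).trans (Matrix.one_mul X)⟩

end Broadcasting

theorem commutative_mutually_commuting_broadcastable_general {𝕜 n ι : Type*} [RCLike 𝕜]
    [Fintype n] [DecidableEq n] (T : ι → Matrix n n 𝕜) (hT : ∀ i, (T i).IsHermitian)
    (hcomm : Pairwise (Commute on T)) :
    ∃ K : n → Matrix (n × n) n 𝕜, krausDual K 1 = 1 ∧ ∀ i, Broadcasts K (T i) := by
  obtain ⟨U, hU, hdiag⟩ := exists_unitary_forall_isDiag hT hcomm
  have hUU : U * Uᴴ = 1 := mem_unitaryGroup_iff.1 hU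
  exact ⟨cloningKraus U, krausDual_cloningKraus_one hUU,
    fun i ↦ broadcasts_cloningKraus hUU (hdiag i)⟩

/-- Two commutative and mutually commuting observables on ℂ^n are
broadcastable. -/
theorem commutative_mutually_commuting_broadcastable {n : ℕ}
    {ΩA ΩB : Type} [Fintype ΩA] [Fintype ΩB]
    (A : ΩA → Mat n) (B : ΩB → Mat n)
    (hApos : ∀ x, (A x).PosSemidef) (hAsum : ∑ x, A x = 1)
    (hBpos : ∀ y, (B y).PosSemidef) (hBsum : ∑ y, B y = 1)
    (hAcomm : ∀ x x', A x * A x' = A x' * A x)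
    (hBcomm : ∀ y y', B y * B y' = B y' * B y)
    (hABcomm : ∀ x y, A x * B y = B y * A x) :
    ∃ (m : ℕ) (K : Fin m → Matrix (Fin n × Fin n) (Fin n) ℂ),
      (∑ i, (K i)ᴴ * K i = 1) ∧
      (∀ x,
        (∑ i, (K i)ᴴ * (A x ⊗ₖ (1 : Mat n)) * K i = A x) ∧
        (∑ i, (K i)ᴴ * ((1 : Mat n) ⊗ₖ A x) * K i = A x)) ∧
      (∀ y,
        (∑ i, (K i)ᴴ * (B y ⊗ₖ (1 : Mat n)) * K i = B y) ∧
        (∑ i, (K i)ᴴ * ((1 : Mat n) ⊗ₖ B y) * K i = B y)) := by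
  obtain ⟨K, hone, hK⟩ := commutative_mutually_commuting_broadcastable_general (Sum.elim A B)
    (Sum.forall.2 ⟨fun x ↦ (hApos x).isHermitian, fun y ↦ (hBpos y).isHermitian⟩)
    (by rintro (x | y) (x' | y') -
        exacts [hAcomm x x', hABcomm x y', (hABcomm x' y).symm, hBcomm y y'])
  exact ⟨n, K, by simpa [krausDual] using hone, fun x ↦ hK (.inl x), fun y ↦ hK (.inr y)⟩
end
end

section
/- Let A and B be observables on ℂ^n and suppose there is an instrument implementing A, with Kraus families (K_{x,i})_i satisfying ∑_i K_{x,i}ᴴ K_{x,i} = A(x), which does not disturb B, i.e., ∑_{x,i} K_{x,i}ᴴ B(y) K_{x,i} = B(y) for every y. Then J(x,y) := ∑_i K_{x,i}ᴴ B(y) K_{x,i} defines a joint observable of A and B: each J(x,y) is positive semidefinite, ∑_{y∈Ω_B} J(x,y) = A(x), and ∑_{x∈Ω_A} J(x,y) = B(y). In particular, if A can be measured without disturbing B then A and B are compatible. -/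
open Matrix
open scoped Kronecker ComplexOrder

noncomputable section

/-!
Measure `A` by the instrument and afterwards measure `B`. In the Heisenberg picture this is the
observable `J x y = Φ_x (B y)`, where `Φ_x b = ∑ i, star (K x i) * b * K x i`. Each `Φ_x` is
additive and positive, so `J` is positive with marginals `Φ_x 1 = A x` and `∑ x, Φ_x (B y)`; the
second is `B y` precisely because the instrument does not disturb `B`.
-/

/-- An observable with finitely many outcomes: a positive resolution of the identity. In the
intended cases `R` is a matrix algebra over `ℂ` or a unital C⋆-algebra. -/
structure IsObservable {R Ω : Type*} [AddCommMonoidWithOne R] [LE R] [Fintype Ω] (B : Ω → R) :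
    Prop where
  nonneg (y : Ω) : 0 ≤ B y
  sum_eq_one : ∑ y, B y = 1

/-- `J` is a joint observable of `A` and `B`, the outcome set `ΩA × ΩB` being curried. The total of
`J` is the total of `A`, so normalization is inherited from `A` instead of being a field. -/
structure IsJointObservable {R ΩA ΩB : Type*} [AddCommMonoid R] [LE R] [Fintype ΩA] [Fintype ΩB]
    (J : ΩA → ΩB → R) (A : ΩA → R) (B : ΩB → R) : Prop where
  nonneg (x : ΩA) (y : ΩB) : 0 ≤ J x y
  sum_right (x : ΩA) : ∑ y, J x y = A x
  sum_left (y : ΩB) : ∑ x, J x y = B y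

section KrausMap

variable {R ι : Type*} [Fintype ι]

/-- The operation with Kraus family `K`, in the Heisenberg picture (acting on effects rather than
on states). -/
def krausMap [NonUnitalNonAssocSemiring R] [Star R] (K : ι → R) : R →+ R where
  toFun b := ∑ i, star (K i) * b * K i
  map_zero' := by simp
  map_add' b c := by simp only [mul_add, add_mul, Finset.sum_add_distrib]

theorem krausMap_apply [NonUnitalNonAssocSemiring R] [Star R] (K : ι → R) (b : R) :
    krausMap K b = ∑ i, star (K i) * b * K i :=
  rfl

theorem krausMap_one [NonAssocSemiring R] [Star R] (K : ι → R) :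
    krausMap K 1 = ∑ i, star (K i) * K i := by
  simp only [krausMap_apply, mul_one]

theorem krausMap_nonneg [NonUnitalSemiring R] [PartialOrder R] [StarRing R] [StarOrderedRing R]
    (K : ι → R) {b : R} (hb : 0 ≤ b) : 0 ≤ krausMap K b :=
  Finset.sum_nonneg fun i _ ↦ star_left_conjugate_nonneg hb (K i)

end KrausMap

section SequentialMeasurement

variable {R ΩA ΩB : Type*} {ι : ΩA → Type*} [Semiring R] [PartialOrder R] [StarRing R]
  [StarOrderedRing R] [Fintype ΩA] [Fintype ΩB] [∀ x, Fintype (ι x)]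

theorem IsObservable.isJointObservable_krausMap {B : ΩB → R} (hB : IsObservable B)
    (K : ∀ x, ι x → R) :
    IsJointObservable (fun x y ↦ krausMap (K x) (B y)) (fun x ↦ krausMap (K x) 1)
      (fun y ↦ ∑ x, krausMap (K x) (B y)) where
  nonneg x y := krausMap_nonneg (K x) (hB.nonneg y)
  sum_right x := by rw [← map_sum, hB.sum_eq_one]
  sum_left _ := rfl

theorem nondisturbing_instrument_gives_joint_observable_general {A : ΩA → R} {B : ΩB → R}
    (hB : IsObservable B) (K : ∀ x, ι x → R) (hinst : ∀ x, ∑ i, star (K x i) * K x i = A x)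
    (hnd : ∀ y, ∑ x, krausMap (K x) (B y) = B y) :
    IsJointObservable (fun x y ↦ krausMap (K x) (B y)) A B := by
  simpa only [krausMap_one, hinst, hnd] using hB.isJointObservable_krausMap K

end SequentialMeasurement

/-- If an instrument implements A and does not disturb B, then
J(x,y) = ∑ᵢ K(x,i)ᴴ B(y) K(x,i) is a joint observable of A and B; in particular,
if A can be measured without disturbing B then A and B are compatible. -/
theorem nondisturbing_instrument_gives_joint_observable {n : ℕ}
    {ΩA ΩB : Type} [Fintype ΩA] [Fintype ΩB]
    (A : ΩA → Mat n) (B : ΩB → Mat n)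
    (hApos : ∀ x, (A x).PosSemidef) (hAsum : ∑ x, A x = 1)
    (hBpos : ∀ y, (B y).PosSemidef) (hBsum : ∑ y, B y = 1)
    {m : ℕ} (K : ΩA → Fin m → Mat n)
    (hinst : ∀ x, ∑ i, (K x i)ᴴ * K x i = A x)
    (hnd : ∀ y, ∑ x, ∑ i, (K x i)ᴴ * B y * K x i = B y) :
    (∀ x y, (∑ i, (K x i)ᴴ * B y * K x i).PosSemidef) ∧
    (∀ x, ∑ y, ∑ i, (K x i)ᴴ * B y * K x i = A x) ∧
    (∀ y, ∑ x, ∑ i, (K x i)ᴴ * B y * K x i = B y) := by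
  open scoped MatrixOrder in
  have hJ := nondisturbing_instrument_gives_joint_observable_general
    ⟨fun y ↦ (hBpos y).nonneg, hBsum⟩ K hinst hnd
  exact ⟨fun x y ↦ (hJ.nonneg x y).posSemidef, hJ.sum_right, hJ.sum_left⟩
end
end

section
/- Let A and B be observables on ℂ^n and let t₁ and t₂ be probability distributions on Ω_A and Ω_B respectively. Define the deformed observables Ã(x) = ½A(x) + ½t₁(x)·1 and B̃(y) = ½B(y) + ½t₂(y)·1. Then J(x,y) := ½t₂(y)A(x) + ½t₁(x)B(y) is a joint observable of Ã and B̃: each J(x,y) is positive semidefinite, ∑_{y∈Ω_B} J(x,y) = Ã(x), and ∑_{x∈Ω_A} J(x,y) = B̃(y). In particular, Ã and B̃ are compatible for any A and B. -/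
open Matrix
open scoped Kronecker ComplexOrder

noncomputable section

section OrderedModule

variable {R M ΩA ΩB Ω : Type*} [Fintype ΩA] [Fintype ΩB] [Fintype Ω]

/-- An observable with outcomes in `Ω`, as used in general probabilistic theories: effects are the
nonnegative elements of an ordered additive monoid, with unit effect `u`. Quantum observables on
`ℂ^n` are the case of matrices under the Loewner order with `u = 1`. -/
structure IsObservable_s6 [AddCommMonoid M] [LE M] (u : M) (A : Ω → M) : Prop where
  nonneg : ∀ x, 0 ≤ A x
  sum_eq : ∑ x, A x = u

/-- A joint observable of `A` and `B`: an observable on pairs of outcomes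
whose first and second marginals are `A` and `B`. -/
structure IsJointObservable_s6 [AddCommMonoid M] [LE M] (u : M) (J : ΩA × ΩB → M)
    (A : ΩA → M) (B : ΩB → M) : Prop extends IsObservable_s6 u J where
  sum_snd : ∀ x, ∑ y, J (x, y) = A x
  sum_fst : ∀ y, ∑ x, J (x, y) = B y

theorem sum_smul_add_smul_const [Semiring R] [AddCommMonoid M] [Module R M]
    {t : Ω → R} (ht : ∑ x, t x = 1) (A : Ω → M) (p q : R) (a : M) :
    ∑ x, (p • A x + (q * t x) • a) = p • ∑ x, A x + q • a := by
  rw [Finset.sum_add_distrib, ← Finset.smul_sum, ← Finset.sum_smul, ← Finset.mul_sum, ht,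
    mul_one]

section IsOrderedAddMonoid

variable [AddCommMonoid M] [PartialOrder M] [IsOrderedAddMonoid M] {u : M}

theorem IsObservable_s6.unit_nonneg {A : Ω → M} (hA : IsObservable_s6 u A) : 0 ≤ u :=
  hA.sum_eq ▸ Finset.sum_nonneg fun x _ => hA.nonneg x

variable [Semiring R] [PartialOrder R] [Module R M] [PosSMulMono R M] {p q : R}

theorem IsObservable_s6.add_noise {A : Ω → M} (hA : IsObservable_s6 u A) {t : Ω → R}
    (ht : t ∈ stdSimplex R Ω) (hp : 0 ≤ p) (hq : 0 ≤ q) (hpq : p + q = 1) :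
    IsObservable_s6 u fun x => p • A x + (q * t x) • u where
  nonneg x := by
    rw [mul_smul]
    exact add_nonneg (smul_nonneg hp (hA.nonneg x))
      (smul_nonneg hq (smul_nonneg (ht.1 x) hA.unit_nonneg))
  sum_eq := by rw [sum_smul_add_smul_const ht.2, hA.sum_eq, ← add_smul, hpq, one_smul]

-- The joint observable is implemented by measuring `A` and drawing `y` from `t₂` with probability
-- `p`, and measuring `B` and drawing `x` from `t₁` with probability `q`.
theorem noisy_observables_compatible_general {A : ΩA → M} {B : ΩB → M}
    (hA : IsObservable_s6 u A) (hB : IsObservable_s6 u B)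
    {t₁ : ΩA → R} {t₂ : ΩB → R} (ht₁ : t₁ ∈ stdSimplex R ΩA) (ht₂ : t₂ ∈ stdSimplex R ΩB)
    (hp : 0 ≤ p) (hq : 0 ≤ q) (hpq : p + q = 1) :
    IsJointObservable_s6 u (fun z => (p * t₂ z.2) • A z.1 + (q * t₁ z.1) • B z.2)
      (fun x => p • A x + (q * t₁ x) • u) (fun y => q • B y + (p * t₂ y) • u) := by
  have marginal_fst (x : ΩA) :
      ∑ y, ((p * t₂ y) • A x + (q * t₁ x) • B y) = p • A x + (q * t₁ x) • u := by
    simp only [add_comm _ ((q * t₁ x) • B _)]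
    rw [sum_smul_add_smul_const ht₂.2, hB.sum_eq, add_comm]
  have marginal_snd (y : ΩB) :
      ∑ x, ((p * t₂ y) • A x + (q * t₁ x) • B y) = q • B y + (p * t₂ y) • u := by
    rw [sum_smul_add_smul_const ht₁.2, hA.sum_eq, add_comm]
  refine ⟨⟨fun ⟨x, y⟩ => ?nonneg, ?sum_eq⟩, marginal_fst, marginal_snd⟩
  case nonneg =>
    simp only [mul_smul]
    exact add_nonneg (smul_nonneg hp (smul_nonneg (ht₂.1 y) (hA.nonneg x)))
      (smul_nonneg hq (smul_nonneg (ht₁.1 x) (hB.nonneg y)))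
  case sum_eq =>
    simp only [Fintype.sum_prod_type, marginal_fst]
    exact (hA.add_noise ht₁ hp hq hpq).sum_eq

end IsOrderedAddMonoid

end OrderedModule

/-- Adding 50% white noise makes any pair of observables compatible:
J(x,y) = ½t₂(y)A(x) + ½t₁(x)B(y) is a joint observable of the deformed observables
Ã(x) = ½A(x) + ½t₁(x)·1 and B̃(y) = ½B(y) + ½t₂(y)·1. -/
theorem noisy_observables_compatible {n : ℕ}
    {ΩA ΩB : Type} [Fintype ΩA] [Fintype ΩB]
    (A : ΩA → Mat n) (B : ΩB → Mat n)
    (hApos : ∀ x, (A x).PosSemidef) (hAsum : ∑ x, A x = 1)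
    (hBpos : ∀ y, (B y).PosSemidef) (hBsum : ∑ y, B y = 1)
    (t₁ : ΩA → ℝ) (t₂ : ΩB → ℝ)
    (ht₁pos : ∀ x, 0 ≤ t₁ x) (ht₁sum : ∑ x, t₁ x = 1)
    (ht₂pos : ∀ y, 0 ≤ t₂ y) (ht₂sum : ∑ y, t₂ y = 1) :
    (∀ x y, (((1/2 : ℝ) * t₂ y) • A x + ((1/2 : ℝ) * t₁ x) • B y).PosSemidef) ∧
    (∀ x, ∑ y, (((1/2 : ℝ) * t₂ y) • A x + ((1/2 : ℝ) * t₁ x) • B y)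
        = (1/2 : ℝ) • A x + ((1/2 : ℝ) * t₁ x) • (1 : Mat n)) ∧
    (∀ y, ∑ x, (((1/2 : ℝ) * t₂ y) • A x + ((1/2 : ℝ) * t₁ x) • B y)
        = (1/2 : ℝ) • B y + ((1/2 : ℝ) * t₂ y) • (1 : Mat n)) := by
  open scoped MatrixOrder in
  have hJ := noisy_observables_compatible_general (p := 1 / 2) (q := 1 / 2)
    ⟨fun x => (hApos x).nonneg, hAsum⟩ ⟨fun y => (hBpos y).nonneg, hBsum⟩
    ⟨ht₁pos, ht₁sum⟩ ⟨ht₂pos, ht₂sum⟩ (by norm_num) (by norm_num) (by norm_num)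
  exact ⟨fun x y => (hJ.nonneg (x, y)).posSemidef, hJ.sum_snd, hJ.sum_fst⟩
end
end

section
/- Let P, Q, B be Hermitian 2×2 complex matrices such that PQ ≠ QP, BP = PB, and BQ = QB. Then B is a scalar multiple of the identity: there exists c ∈ ℝ with B = c·1. Consequently, if a qubit observable A is not commutative and a qubit observable B mutually commutes with A, then B is a trivial observable (every B(y) is a scalar multiple of the identity). -/
/-!
An endomorphism of a plane either is a scalar or moves some vector `v` off its own line. In the
second case `v` is a cyclic vector, so that the centralizer consists of the polynomials in the
endomorphism and is commutative. Hence only a scalar commutes with two noncommuting endomorphisms,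
and a Hermitian scalar matrix is a real one.
-/

open Matrix
open scoped Kronecker ComplexOrder

noncomputable section

section CyclicVector

variable {R M : Type*} [CommSemiring R] [AddCommMonoid M] [Module R M]
  {f g h : Module.End R M} {v : M}

/-- `v` is a cyclic vector of `f`: every vector is obtained by applying to `v` a polynomial in `f`.
The polynomials in `f` are encoded as the elements of the subalgebra generated by `f`. -/
def IsCyclicVector (f : Module.End R M) (v : M) : Prop :=
  ∀ w, ∃ p ∈ Algebra.adjoin R {f}, p v = w

theorem IsCyclicVector.mem_adjoin_of_commute (hv : IsCyclicVector f v) (hg : Commute g f) :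
    g ∈ Algebra.adjoin R {f} := by
  obtain ⟨p, hp, hpv⟩ := hv (g v)
  suffices g = p from this ▸ hp
  ext w
  obtain ⟨q, hq, rfl⟩ := hv w
  have hgq : Commute g q := Algebra.commute_of_mem_adjoin_singleton_of_commute hq hg
  have hqp : Commute q p := Algebra.commute_of_mem_adjoin_singleton_of_commute hp
    (Algebra.commute_of_mem_adjoin_self hq).symm
  calc g (q v) = q (g v) := LinearMap.congr_fun hgq v
    _ = q (p v) := by rw [hpv]
    _ = p (q v) := LinearMap.congr_fun hqp v

theorem IsCyclicVector.commute_of_commute (hv : IsCyclicVector f v) (hg : Commute f g)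
    (hh : Commute f h) : Commute g h :=
  (Algebra.commute_of_mem_adjoin_singleton_of_commute
    (hv.mem_adjoin_of_commute hg.symm) hh.symm).symm

end CyclicVector

section Plane

variable {K V : Type*} [Field K] [AddCommGroup V] [Module K V] {f g h : Module.End K V}

theorem isCyclicVector_of_linearIndependent (hV : Module.finrank K V = 2) {v : V}
    (hv : LinearIndependent K ![v, f v]) : IsCyclicVector f v := by
  intro w
  have hspan : Submodule.span K {v, f v} = ⊤ := by
    simpa [Set.pair_comm] using hv.span_eq_top_of_card_eq_finrank (by simp [hV])
  obtain ⟨a, b, rfl⟩ := Submodule.mem_span_pair.mp (hspan ▸ Submodule.mem_top : w ∈ _)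
  exact ⟨a • 1 + b • f, add_mem (Subalgebra.smul_mem _ (one_mem _) a)
    (Subalgebra.smul_mem _ (Algebra.self_mem_adjoin_singleton K f) b), rfl⟩

theorem exists_isCyclicVector_or_exists_eq_smul_one (hV : Module.finrank K V = 2)
    (f : Module.End K V) : (∃ v, IsCyclicVector f v) ∨ ∃ a : K, f = a • 1 := by
  by_cases hf : ∃ v, LinearIndependent K ![v, f v]
  · exact .inl (hf.imp fun _ hv ↦ isCyclicVector_of_linearIndependent hV hv)
  · exact .inr (LinearMap.exists_eq_smul_id_of_forall_notLinearIndependent (not_exists.mp hf))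

theorem exists_eq_smul_one_of_commute_of_not_commute (hV : Module.finrank K V = 2)
    (hgh : ¬Commute g h) (hg : Commute f g) (hh : Commute f h) : ∃ a : K, f = a • 1 :=
  (exists_isCyclicVector_or_exists_eq_smul_one hV f).resolve_left
    fun ⟨_, hv⟩ ↦ hgh (hv.commute_of_commute hg hh)

end Plane

section Matrices

variable {n : Type*} [DecidableEq n]

theorem matrix_exists_eq_smul_one_of_commute_of_not_commute {K : Type*} [Field K] [Fintype n]
    (hn : Fintype.card n = 2) {P Q B : Matrix n n K} (hPQ : ¬Commute P Q) (hBP : Commute B P)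
    (hBQ : Commute B Q) : ∃ a : K, B = a • (1 : Matrix n n K) := by
  let e : Matrix n n K ≃ₐ[K] Module.End K (n → K) := Matrix.toLinAlgEquiv'
  have hV : Module.finrank K (n → K) = 2 := by rw [Module.finrank_fintype_fun_eq_card, hn]
  have hePQ : ¬Commute (e P) (e Q) := (commute_map_iff e.injective).not.mpr hPQ
  obtain ⟨a, ha⟩ :=
    exists_eq_smul_one_of_commute_of_not_commute hV hePQ (hBP.map e) (hBQ.map e)
  exact ⟨a, e.injective (by rw [ha, map_smul, map_one])⟩

variable {𝕜 : Type*} [RCLike 𝕜]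

theorem exists_real_smul_one_eq_of_isHermitian {a : 𝕜}
    (ha : (a • (1 : Matrix n n 𝕜)).IsHermitian) :
    ∃ c : ℝ, a • (1 : Matrix n n 𝕜) = (c : 𝕜) • (1 : Matrix n n 𝕜) := by
  rcases isEmpty_or_nonempty n with _ | ⟨⟨i⟩⟩
  · exact ⟨0, Subsingleton.elim _ _⟩
  · obtain ⟨c, rfl⟩ := RCLike.conj_eq_iff_real.mp (by simpa using ha.apply i i)
    exact ⟨c, rfl⟩

theorem qubit_commutant_of_noncommuting_pair_is_scalar_general [Fintype n]
    (hn : Fintype.card n = 2) {ι : Type*} {A : ι → Matrix n n 𝕜} {B : Matrix n n 𝕜}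
    (hB : B.IsHermitian) (hA : ¬∀ x x', Commute (A x) (A x')) (hBA : ∀ x, Commute B (A x)) :
    ∃ c : ℝ, B = (c : 𝕜) • (1 : Matrix n n 𝕜) := by
  obtain ⟨x, x', hxx'⟩ : ∃ x x', ¬Commute (A x) (A x') := by simpa only [not_forall] using hA
  obtain ⟨a, rfl⟩ :=
    matrix_exists_eq_smul_one_of_commute_of_not_commute hn hxx' (hBA x) (hBA x')
  exact exists_real_smul_one_eq_of_isHermitian hB

end Matrices

/-- A Hermitian 2×2 matrix commuting with two noncommuting Hermitian
matrices is a real scalar multiple of the identity; consequently, a qubit observable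
mutually commuting with a noncommutative qubit observable is trivial. -/
theorem qubit_commutant_of_noncommuting_pair_is_scalar :
    (∀ P Q B : Mat 2, P.IsHermitian → Q.IsHermitian → B.IsHermitian →
      P * Q ≠ Q * P → B * P = P * B → B * Q = Q * B →
      ∃ c : ℝ, B = (c : ℂ) • (1 : Mat 2)) ∧
    (∀ (ΩA ΩB : Type) (_ : Fintype ΩA) (_ : Fintype ΩB)
      (A : ΩA → Mat 2) (B : ΩB → Mat 2),
      (∀ x, (A x).PosSemidef) → (∑ x, A x = 1) →
      (∀ y, (B y).PosSemidef) → (∑ y, B y = 1) →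
      (¬ ∀ x x', A x * A x' = A x' * A x) →
      (∀ x y, A x * B y = B y * A x) →
      ∀ y, ∃ c : ℝ, B y = (c : ℂ) • (1 : Mat 2)) := by
  have scalar {ι : Type} (A : ι → Mat 2) {B : Mat 2} :=
    qubit_commutant_of_noncommuting_pair_is_scalar_general (Fintype.card_fin 2) (A := A) (B := B)
  exact ⟨fun P Q B _ _ hB hPQ hBP hBQ ↦
      scalar ![P, Q] hB (fun h ↦ hPQ (h 0 1)) (Fin.forall_fin_two.mpr ⟨hBP, hBQ⟩),
    fun ΩA ΩB _ _ A B _ _ hB _ hA hAB y ↦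
      scalar A (hB y).isHermitian hA fun x ↦ (hAB x y).symm⟩
end
end

section
/- Two qubit observables A and B (observables on ℂ²) are one-side broadcastable — i.e., there exists a broadcasting channel Λ with Λ*(A(x) ⊗ 1) = A(x) and Λ*(1 ⊗ B(y)) = B(y) for all outcomes x, y — if and only if A and B are mutually commuting, i.e., A(x)B(y) = B(y)A(x) for all outcomes x, y. -/
open Matrix
open scoped Kronecker ComplexOrder

noncomputable section

/-!
If a unital completely positive map `Φ` satisfies `Φ (P * P) = Φ P * Φ P` for a Hermitian `P`, then
its Kraus operators intertwine `P` and `Φ P`, so `Φ` carries matrices commuting with `P` to matrices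
commuting with `Φ P`. For a qubit, Cayley–Hamilton makes `a * a` a combination of `a` and `1`, so
`P = a ⊗ 1` has this property as soon as `Φ (a ⊗ 1) = a`; it commutes with `1 ⊗ b`.

Conversely, if one of two commuting families is scalar, it suffices to send the input to the other
factor. Otherwise each family contains a non-scalar matrix, and an eigenbasis `u` of one of them
diagonalizes both families: on `ℂ²`, everything commuting with a non-scalar diagonal matrix is
diagonal. Then the isometry `uᵢ ↦ uᵢ ⊗ uᵢ` broadcasts both families.
-/

section HeisenbergDual

variable {R ι m n : Type*} [Fintype ι] [Fintype m] [CommSemiring R] [StarRing R]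

/-- The Heisenberg dual `X ↦ ∑ i, (K i)ᴴ * X * K i` of the map with Kraus operators `K`, as a
linear map. Trace preservation is not built in: it amounts to `heisenbergDual K 1 = 1`. -/
def heisenbergDual (K : ι → Matrix m n R) : Matrix m m R →ₗ[R] Matrix n n R where
  toFun X := ∑ i, (K i)ᴴ * X * K i
  map_add' X Y := by simp only [Matrix.mul_add, Matrix.add_mul, Finset.sum_add_distrib]
  map_smul' c X := by
    simp only [Matrix.mul_smul, Matrix.smul_mul, Finset.smul_sum, RingHom.id_apply]

theorem heisenbergDual_apply (K : ι → Matrix m n R) (X : Matrix m m R) :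
    heisenbergDual K X = ∑ i, (K i)ᴴ * X * K i :=
  rfl

theorem heisenbergDual_one [DecidableEq m] (K : ι → Matrix m n R) :
    heisenbergDual K 1 = ∑ i, (K i)ᴴ * K i := by
  simp only [heisenbergDual_apply, Matrix.mul_one]

theorem conjTranspose_heisenbergDual (K : ι → Matrix m n R) (X : Matrix m m R) :
    (heisenbergDual K X)ᴴ = heisenbergDual K Xᴴ := by
  simp only [heisenbergDual_apply, conjTranspose_sum, conjTranspose_mul,
    conjTranspose_conjTranspose, Matrix.mul_assoc]

theorem heisenbergDual_mul_of_intertwines [Fintype n] {K : ι → Matrix m n R} {P : Matrix m m R}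
    {a : Matrix n n R} (h : ∀ i, P * K i = K i * a) (X : Matrix m m R) :
    heisenbergDual K (X * P) = heisenbergDual K X * a := by
  simp only [heisenbergDual_apply, Matrix.sum_mul, Matrix.mul_assoc, h]

theorem heisenbergDual_mul_mul {m' n' : Type*} [Fintype m'] [Fintype n] (K : ι → Matrix m n R)
    (W : Matrix m' m R) (V : Matrix n n' R) (X : Matrix m' m' R) :
    heisenbergDual (fun i => W * K i * V) X = Vᴴ * heisenbergDual K (Wᴴ * X * W) * V := by
  simp only [heisenbergDual_apply, conjTranspose_mul, Matrix.sum_mul, Matrix.mul_sum,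
    Matrix.mul_assoc]

end HeisenbergDual

section MultiplicativeDomain

theorem sum_conjTranspose_mul_self_mul_sub_mul {R ι m n : Type*} [Fintype ι] [Fintype m] [Fintype n]
    [DecidableEq m] [CommRing R] [StarRing R] (K : ι → Matrix m n R) (P : Matrix m m R)
    (a : Matrix n n R) :
    ∑ i, (P * K i - K i * a)ᴴ * (P * K i - K i * a) =
      heisenbergDual K (Pᴴ * P) - heisenbergDual K Pᴴ * a - aᴴ * heisenbergDual K P
        + aᴴ * heisenbergDual K 1 * a := by
  simp only [heisenbergDual_apply, Matrix.sum_mul, Matrix.mul_sum, ← Finset.sum_sub_distrib,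
    ← Finset.sum_add_distrib]
  refine Finset.sum_congr rfl fun i _ => ?_
  simp only [conjTranspose_sub, conjTranspose_mul, Matrix.mul_sub, Matrix.sub_mul,
    Matrix.mul_assoc, Matrix.one_mul]
  abel

variable {R ι m n : Type*} [Fintype ι] [Fintype m] [CommRing R] [PartialOrder R] [StarRing R]
  [StarOrderedRing R] [NoZeroDivisors R]

theorem eq_zero_of_sum_conjTranspose_mul_self_eq_zero [Finite n] {D : ι → Matrix m n R}
    (h : ∑ i, (D i)ᴴ * D i = 0) (i : ι) : D i = 0 := by
  cases nonempty_fintype n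
  have sum_trace : ∑ i, ((D i)ᴴ * D i).trace = 0 := by rw [← trace_sum, h, trace_zero]
  have trace_eq_zero := (Finset.sum_eq_zero_iff_of_nonneg
    fun i _ => (posSemidef_conjTranspose_mul_self (D i)).trace_nonneg).1 sum_trace
  exact trace_conjTranspose_mul_self_eq_zero_iff.1 (trace_eq_zero i (Finset.mem_univ i))

variable [Fintype n] [DecidableEq m] [DecidableEq n] {K : ι → Matrix m n R} {P Q : Matrix m m R}

theorem mul_eq_mul_heisenbergDual (hK : heisenbergDual K 1 = 1)
    (hP : heisenbergDual K (Pᴴ * P) = (heisenbergDual K P)ᴴ * heisenbergDual K P) (i : ι) :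
    P * K i = K i * heisenbergDual K P := by
  refine sub_eq_zero.1 (eq_zero_of_sum_conjTranspose_mul_self_eq_zero
    (D := fun i => P * K i - K i * heisenbergDual K P) ?_ i)
  rw [sum_conjTranspose_mul_self_mul_sub_mul, hP, hK, ← conjTranspose_heisenbergDual,
    Matrix.mul_one]
  abel

theorem commute_heisenbergDual (hK : heisenbergDual K 1 = 1) (hP : P.IsHermitian)
    (hPP : heisenbergDual K (P * P) = heisenbergDual K P * heisenbergDual K P)
    (hPQ : Commute P Q) : Commute (heisenbergDual K P) (heisenbergDual K Q) := by
  have dual_hermitian : (heisenbergDual K P)ᴴ = heisenbergDual K P := by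
    rw [conjTranspose_heisenbergDual, hP.eq]
  have mul_right (X : Matrix m m R) :
      heisenbergDual K (X * P) = heisenbergDual K X * heisenbergDual K P :=
    heisenbergDual_mul_of_intertwines
      (mul_eq_mul_heisenbergDual hK (by rw [hP.eq, dual_hermitian, hPP])) X
  have mul_left : heisenbergDual K (P * Q) = heisenbergDual K P * heisenbergDual K Q := by
    have := congrArg conjTranspose (mul_right Qᴴ)
    simpa only [conjTranspose_heisenbergDual, conjTranspose_mul, conjTranspose_conjTranspose,
      hP.eq] using this
  rw [Commute, SemiconjBy, ← mul_left, ← mul_right, hPQ.eq]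

end MultiplicativeDomain

section Broadcasting

theorem conjTranspose_submatrix_one_mul_mul {R m n : Type*} [Fintype m] [DecidableEq m]
    [Semiring R] [StarRing R] (f : n → m) (X : Matrix m m R) :
    ((1 : Matrix m m R).submatrix id f)ᴴ * X * (1 : Matrix m m R).submatrix id f =
      X.submatrix f f := by
  rw [conjTranspose_submatrix, conjTranspose_one, ← Equiv.coe_refl, one_submatrix_mul,
    mul_submatrix_one]
  rfl

variable {R α β n : Type*} [Fintype n] [DecidableEq n] [CommSemiring R] [StarRing R]

/-- One-side broadcastability of two families of square matrices: some channel into two copies of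
the system reproduces the family `A` on the first copy and the family `B` on the second. -/
def OneSideBroadcastable (A : α → Matrix n n R) (B : β → Matrix n n R) : Prop :=
  ∃ (m : ℕ) (K : Fin m → Matrix (n × n) n R), (∑ i, (K i)ᴴ * K i = 1) ∧
    (∀ x, heisenbergDual K (A x ⊗ₖ (1 : Matrix n n R)) = A x) ∧
    (∀ y, heisenbergDual K ((1 : Matrix n n R) ⊗ₖ B y) = B y)

variable {A : α → Matrix n n R} {B : β → Matrix n n R}

theorem oneSideBroadcastable_of_submatrix {f : n → n × n} (hf : f.Injective)
    (hA : ∀ x, (A x ⊗ₖ (1 : Matrix n n R)).submatrix f f = A x)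
    (hB : ∀ y, ((1 : Matrix n n R) ⊗ₖ B y).submatrix f f = B y) : OneSideBroadcastable A B := by
  let V : Matrix (n × n) n R := (1 : Matrix (n × n) (n × n) R).submatrix id f
  have dual (X : Matrix (n × n) (n × n) R) :
      heisenbergDual (fun _ : Fin 1 => V) X = X.submatrix f f := by
    rw [heisenbergDual_apply, Fin.sum_univ_one, conjTranspose_submatrix_one_mul_mul]
  refine ⟨1, fun _ => V, ?_, fun x => (dual _).trans (hA x), fun y => (dual _).trans (hB y)⟩
  rw [← heisenbergDual_one, dual, submatrix_one f hf]

theorem oneSideBroadcastable_of_mem_bot_left [Nonempty n]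
    (hA : ∀ x, A x ∈ (⊥ : Subalgebra R (Matrix n n R))) : OneSideBroadcastable A B := by
  let i₀ := Classical.arbitrary n
  refine oneSideBroadcastable_of_submatrix (Prod.mk_right_injective i₀) (fun x => ?_) fun y => ?_
  · obtain ⟨c, hc⟩ := Algebra.mem_bot.1 (hA x)
    ext i j
    simp [← hc, algebraMap_matrix_apply, one_apply]
  · ext i j
    simp

theorem oneSideBroadcastable_of_mem_bot_right [Nonempty n]
    (hB : ∀ y, B y ∈ (⊥ : Subalgebra R (Matrix n n R))) : OneSideBroadcastable A B := by
  let i₀ := Classical.arbitrary n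
  refine oneSideBroadcastable_of_submatrix (Prod.mk_left_injective i₀) (fun x => ?_) fun y => ?_
  · ext i j
    simp
  · obtain ⟨c, hc⟩ := Algebra.mem_bot.1 (hB y)
    ext i j
    simp [← hc, algebraMap_matrix_apply, one_apply]

theorem oneSideBroadcastable_of_isDiag (hA : ∀ x, (A x).IsDiag) (hB : ∀ y, (B y).IsDiag) :
    OneSideBroadcastable A B := by
  have compress (M N : Matrix n n R) :
      (M ⊗ₖ N).submatrix (fun i => (i, i)) (fun i => (i, i)) = M ⊙ N := rfl
  refine oneSideBroadcastable_of_submatrix (f := fun i => (i, i))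
    (fun _ _ h => (Prod.mk.inj h).1) (fun x => ?_) fun y => ?_
  · rw [compress, hadamard_one, (hA x).diagonal_diag]
  · rw [compress, one_hadamard, (hB y).diagonal_diag]

theorem OneSideBroadcastable.of_conjStarAlgAut (U : unitary (Matrix n n R))
    (h : OneSideBroadcastable (fun x => Unitary.conjStarAlgAut R _ U (A x))
      (fun y => Unitary.conjStarAlgAut R _ U (B y))) :
    OneSideBroadcastable A B := by
  obtain ⟨m, K, hK, hKA, hKB⟩ := h
  let φ := Unitary.conjStarAlgAut R (Matrix n n R) U
  let W := (U : Matrix n n R)ᴴ ⊗ₖ (U : Matrix n n R)ᴴ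
  let K' i := W * K i * (U : Matrix n n R)
  have conj_kronecker (a b : Matrix n n R) : Wᴴ * (a ⊗ₖ b) * W = φ a ⊗ₖ φ b := by
    rw [conjTranspose_kronecker, ← mul_kronecker_mul, ← mul_kronecker_mul,
      conjTranspose_conjTranspose]
    rfl
  have dual (a b : Matrix n n R) :
      heisenbergDual K' (a ⊗ₖ b) = φ.symm (heisenbergDual K (φ a ⊗ₖ φ b)) := by
    rw [heisenbergDual_mul_mul, conj_kronecker]
    rfl
  refine ⟨m, K', ?_, fun x => ?_, fun y => ?_⟩
  · rw [← heisenbergDual_one, ← one_kronecker_one, dual, map_one, one_kronecker_one,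
      heisenbergDual_one, hK, map_one]
  · rw [dual, map_one, hKA, φ.symm_apply_apply]
  · rw [dual, map_one, hKB, φ.symm_apply_apply]

end Broadcasting

section Diagonal

theorem isDiag_of_commute_diagonal {R n : Type*} [Fintype n] [DecidableEq n] [CommRing R]
    [NoZeroDivisors R] {d : n → R} (hd : d.Injective) {M : Matrix n n R}
    (h : Commute (diagonal d) M) : M.IsDiag := by
  intro i j hij
  have entry : d i * M i j = M i j * d j := by
    simpa only [diagonal_mul, mul_diagonal] using congrFun (congrFun h.eq i) j
  have : (d i - d j) * M i j = 0 := by linear_combination entry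
  exact (mul_eq_zero.1 this).resolve_left (sub_ne_zero.2 (hd.ne hij))

theorem isDiag_of_commute_isDiag_fin_two {R : Type*} [CommRing R] [NoZeroDivisors R]
    {M N : Matrix (Fin 2) (Fin 2) R} (hM : M.IsDiag)
    (hM_scalar : M ∉ (⊥ : Subalgebra R (Matrix (Fin 2) (Fin 2) R))) (h : Commute M N) :
    N.IsDiag := by
  rw [← hM.diagonal_diag] at h
  have diag_ne : M 0 0 ≠ M 1 1 := fun heq => hM_scalar <| Algebra.mem_bot.2 ⟨M 0 0, by
    rw [← hM.diagonal_diag, algebraMap_eq_diagonal]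
    congr 1
    ext i
    fin_cases i
    · rfl
    · exact heq⟩
  refine isDiag_of_commute_diagonal (fun i j hij => ?_) h
  fin_cases i <;> fin_cases j <;> simp_all [diag]

end Diagonal

section Qubit

theorem mul_self_eq_trace_smul_sub_det_smul_one {R : Type*} [CommRing R]
    (M : Matrix (Fin 2) (Fin 2) R) : M * M = M.trace • M - M.det • 1 := by
  nontriviality R
  have cayley_hamilton := aeval_self_charpoly M
  simp only [charpoly_fin_two, map_add, map_sub, map_mul, map_pow, Polynomial.aeval_X,
    Polynomial.aeval_C, Algebra.algebraMap_eq_smul_one] at cayley_hamilton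
  rw [← sub_eq_zero, ← cayley_hamilton]
  simp only [sq, smul_mul_assoc, one_mul]
  abel

theorem OneSideBroadcastable.commute {R α β : Type*} [CommRing R] [PartialOrder R] [StarRing R]
    [StarOrderedRing R] [NoZeroDivisors R] {A : α → Matrix (Fin 2) (Fin 2) R}
    {B : β → Matrix (Fin 2) (Fin 2) R} (h : OneSideBroadcastable A B)
    {x : α} (hx : (A x).IsHermitian) (y : β) : Commute (A x) (B y) := by
  obtain ⟨m, K, hK, hKA, hKB⟩ := h
  rw [← heisenbergDual_one] at hK
  let P := A x ⊗ₖ (1 : Matrix (Fin 2) (Fin 2) R)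
  let Q := (1 : Matrix (Fin 2) (Fin 2) R) ⊗ₖ B y
  have hP : P.IsHermitian := by
    rw [IsHermitian, conjTranspose_kronecker, hx.eq, conjTranspose_one]
  have mul_self_P : P * P = (A x).trace • P - (A x).det • 1 := by
    rw [← mul_kronecker_mul, mul_self_eq_trace_smul_sub_det_smul_one, one_mul, sub_eq_add_neg,
      ← neg_smul, add_kronecker, smul_kronecker, smul_kronecker, one_kronecker_one, neg_smul,
      ← sub_eq_add_neg]
  have dual_mul_self : heisenbergDual K (P * P) = heisenbergDual K P * heisenbergDual K P := by
    rw [mul_self_P, map_sub, map_smul, map_smul, hK, hKA,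
      mul_self_eq_trace_smul_sub_det_smul_one (A x)]
  have hPQ : Commute P Q := by
    rw [Commute, SemiconjBy, ← mul_kronecker_mul, ← mul_kronecker_mul, one_mul, one_mul, mul_one,
      mul_one]
  simpa only [P, Q, hKA, hKB] using commute_heisenbergDual hK hP dual_mul_self hPQ

variable {𝕜 α β : Type*} [RCLike 𝕜] {A : α → Matrix (Fin 2) (Fin 2) 𝕜}
  {B : β → Matrix (Fin 2) (Fin 2) 𝕜}

theorem oneSideBroadcastable_of_commute (hA : ∀ x, (A x).IsHermitian)
    (hAB : ∀ x y, Commute (A x) (B y)) : OneSideBroadcastable A B := by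
  by_cases hA_scalar : ∀ x, A x ∈ (⊥ : Subalgebra 𝕜 (Matrix (Fin 2) (Fin 2) 𝕜))
  · exact oneSideBroadcastable_of_mem_bot_left hA_scalar
  by_cases hB_scalar : ∀ y, B y ∈ (⊥ : Subalgebra 𝕜 (Matrix (Fin 2) (Fin 2) 𝕜))
  · exact oneSideBroadcastable_of_mem_bot_right hB_scalar
  push Not at hA_scalar hB_scalar
  obtain ⟨x₀, hx₀⟩ := hA_scalar
  obtain ⟨y₀, hy₀⟩ := hB_scalar
  let U := (hA x₀).eigenvectorUnitary
  let φ := Unitary.conjStarAlgAut 𝕜 (Matrix (Fin 2) (Fin 2) 𝕜) (star U)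
  have mem_bot_of_map {M : Matrix (Fin 2) (Fin 2) 𝕜} (hM : φ M ∈ (⊥ : Subalgebra 𝕜 _)) :
      M ∈ (⊥ : Subalgebra 𝕜 _) := by
    obtain ⟨c, hc⟩ := Algebra.mem_bot.1 hM
    exact Algebra.mem_bot.2 ⟨c, φ.injective ((AlgHomClass.commutes φ c).trans hc)⟩
  have diag_x₀ : (φ (A x₀)).IsDiag := by
    rw [(hA x₀).conjStarAlgAut_star_eigenvectorUnitary]
    exact isDiag_diagonal _
  have diag_B (y : β) : (φ (B y)).IsDiag :=
    isDiag_of_commute_isDiag_fin_two diag_x₀ (mt mem_bot_of_map hx₀) ((hAB x₀ y).map φ)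
  have diag_A (x : α) : (φ (A x)).IsDiag :=
    isDiag_of_commute_isDiag_fin_two (diag_B y₀) (mt mem_bot_of_map hy₀) ((hAB x y₀).symm.map φ)
  exact .of_conjStarAlgAut (star U) (oneSideBroadcastable_of_isDiag diag_A diag_B)

theorem qubit_one_side_broadcastable_iff_mutually_commuting_general
    (hA : ∀ x, (A x).IsHermitian) :
    OneSideBroadcastable A B ↔ ∀ x y, A x * B y = B y * A x :=
  ⟨fun h x y => (h.commute (hA x) y).eq, oneSideBroadcastable_of_commute hA⟩

end Qubit

/-- Two qubit observables are one-side broadcastable iff they are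
mutually commuting. -/
theorem qubit_one_side_broadcastable_iff_mutually_commuting
    {ΩA ΩB : Type} [Fintype ΩA] [Fintype ΩB]
    (A : ΩA → Mat 2) (B : ΩB → Mat 2)
    (hApos : ∀ x, (A x).PosSemidef) (hAsum : ∑ x, A x = 1)
    (hBpos : ∀ y, (B y).PosSemidef) (hBsum : ∑ y, B y = 1) :
    (∃ (m : ℕ) (K : Fin m → Matrix (Fin 2 × Fin 2) (Fin 2) ℂ),
      (∑ i, (K i)ᴴ * K i = 1) ∧
      (∀ x, ∑ i, (K i)ᴴ * (A x ⊗ₖ (1 : Mat 2)) * K i = A x) ∧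
      (∀ y, ∑ i, (K i)ᴴ * ((1 : Mat 2) ⊗ₖ B y) * K i = B y)) ↔
    (∀ x y, A x * B y = B y * A x) :=
  qubit_one_side_broadcastable_iff_mutually_commuting_general fun x => (hApos x).isHermitian
end
end
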